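/- Let N = A₁, …, A_K be a network of timed automata with variables and η a trace of N with configurations (l_h, v_var,h, v_h) for h ∈ ℕ. Then for every h ∈ ℕ and every 1 ≤ k ≤ K, the invariant Inv_k(l_h[k]) of the location occupied by A_k in the h-th configuration is weakly satisfied by some clock valuation; in particular, Inv_k(l_h[k]) contains no positive literal of the form x = d. (Equivalently: a location whose invariant contains a conjunct x = d is never occupied along any trace, since time strictly progresses.) -/

import Mathlib

open scoped NNReal

namespace TAMC

/-! ### Clock constraints: atoms `x < d`, `x = d`, `x > d` and their negations,
    classical satisfaction `⊨` and weak satisfaction `⊨_w`. -/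

/-- Comparison operators `<`, `=`, `>` appearing in clock atoms. -/
inductive CCmp where
  | lt | eq | gt
deriving DecidableEq

def CCmp.holds : CCmp → ℝ≥0 → ℝ≥0 → Prop
  | .lt, a, b => a < b
  | .eq, a, b => a = b
  | .gt, a, b => b < a

/-- A literal of a clock constraint: an atom `x ∼ d` (`pos = true`)
    or a negated atom `¬(x ∼ d)` (`pos = false`). -/
structure ClockLit (X : Type) where
  pos : Bool
  x : X
  cmp : CCmp
  d : ℕ

/-- A clock constraint: a finite conjunction of literals. -/
abbrev ClockConstraint (X : Type) := List (ClockLit X)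

/-- A clock valuation `v : X → ℝ≥0`. -/
abbrev ClockVal (X : Type) := X → ℝ≥0

/-- Classical satisfaction of a literal. -/
def ClockLit.sat {X : Type} (v : ClockVal X) (l : ClockLit X) : Prop :=
  if l.pos then l.cmp.holds (v l.x) (l.d : ℝ≥0) else ¬ l.cmp.holds (v l.x) (l.d : ℝ≥0)

/-- Weak satisfaction of a literal:
`v ⊨_w x < d` iff `v x ≤ d`; `v ⊨_w x > d` iff `v x ≥ d`; `v ⊨_w x = d` never;
`v ⊨_w ¬(x ∼ d)` iff `¬ (v x ∼ d)` for `∼ ∈ {<, >}`; `v ⊨_w ¬(x = d)` always. -/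
def ClockLit.wsat {X : Type} (v : ClockVal X) (l : ClockLit X) : Prop :=
  if l.pos then
    match l.cmp with
    | .lt => v l.x ≤ (l.d : ℝ≥0)
    | .eq => False
    | .gt => (l.d : ℝ≥0) ≤ v l.x
  else
    match l.cmp with
    | .eq => True
    | .lt => ¬ (v l.x < (l.d : ℝ≥0))
    | .gt => ¬ ((l.d : ℝ≥0) < v l.x)

/-- `v ⊨ γ` : classical satisfaction of a clock constraint (componentwise on literals). -/
def ccSat {X : Type} (v : ClockVal X) (γ : ClockConstraint X) : Prop :=
  ∀ l ∈ γ, l.sat v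

/-- `v ⊨_w γ` : weak satisfaction of a clock constraint (componentwise on literals). -/
def ccWSat {X : Type} (v : ClockVal X) (γ : ClockConstraint X) : Prop :=
  ∀ l ∈ γ, l.wsat v

/-- `(v + r) x = v x + r`. -/
def ClockVal.shift {X : Type} (v : ClockVal X) (r : ℝ≥0) : ClockVal X :=
  fun x => v x + r

/-! ### Timed automata with variables, networks, configurations and transitions. -/

/-- Arithmetic expressions over integer variables and constants in `ℤ`. -/
inductive IntExpr (V : Type) where
  | const (c : ℤ)
  | var (n : V)
  | add (a b : IntExpr V)
  | neg (a : IntExpr V)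
  | mul (a b : IntExpr V)

def IntExpr.eval {V : Type} (ν : V → ℤ) : IntExpr V → ℤ
  | .const c => c
  | .var n => ν n
  | .add a b => a.eval ν + b.eval ν
  | .neg a => - a.eval ν
  | .mul a b => a.eval ν * b.eval ν

/-- Variable constraints `γ ::= n ∼ c | n ∼ n' | ¬γ | γ ∧ γ` with `∼ ∈ {<, =}`. -/
inductive VarConstraint (V : Type) where
  | ltC (n : V) (c : ℤ)
  | eqC (n : V) (c : ℤ)
  | ltV (n m : V)
  | eqV (n m : V)
  | not (g : VarConstraint V)
  | and (g h : VarConstraint V)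

def VarConstraint.sat {V : Type} (ν : V → ℤ) : VarConstraint V → Prop
  | .ltC n c => ν n < c
  | .eqC n c => ν n = c
  | .ltV n m => ν n < ν m
  | .eqV n m => ν n = ν m
  | .not g => ¬ g.sat ν
  | .and g h => g.sat ν ∧ h.sat ν

/-- A transition `t = (q, q′, γ, ξ, α, ζ, μ)` of a timed automaton with variables.
`E` is the type of event labels decorating transitions. -/
structure TATransition (X E V Q : Type) where
  src : Q
  tgt : Q
  guard : ClockConstraint X
  vguard : VarConstraint V
  event : E
  resets : List X
  assigns : List (V × IntExpr V)

/-- `U(t)`: the variables assigned by the assignment set of `t`. -/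
def TATransition.updated {X E V Q : Type} (t : TATransition X E V Q) : List V :=
  t.assigns.map Prod.fst

/-- A timed automaton with variables (the shared components `AP`, `X`, `E`, `V`
are type parameters; the initial variable valuation is that of the network). -/
structure TimedAutomaton (AP X E V Q : Type) where
  init : Q
  inv : Q → ClockConstraint X
  label : Q → Finset AP
  trans : List (TATransition X E V Q)

/-- Edge tags: `ei` (excluded-included, open-closed `α⁾⁽ᵉⁱ⁾ = α^{)[}`) and
`ie` (included-excluded, closed-open `α^{](}`). -/
inductive EdgeTag where
  | ei | ie
deriving DecidableEq

/-- A vector `Λ` labelling a discrete transition: `Λ[k] = some (α, b)` means the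
`k`-th automaton fires a transition labelled `α` with edge tag `b`;
`Λ[k] = none` is the symbol `_` (the automaton does not move). -/
abbrev SyncVec (E : Type) (K : ℕ) := Fin K → Option (E × EdgeTag)

/-- A configuration `(l, v_var, v)` of a network of `K` timed automata with
location types `Q k`. -/
structure TAConfig {K : ℕ} (Q : Fin K → Type) (X V : Type) where
  loc : ∀ k, Q k
  varVal : V → ℤ
  clockVal : ClockVal X

/-- The configuration obtained by letting `δ` time units elapse. -/
def TAConfig.shift {K : ℕ} {Q : Fin K → Type} {X V : Type}
    (c : TAConfig Q X V) (δ : ℝ≥0) : TAConfig Q X V :=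
  { c with clockVal := c.clockVal.shift δ }

section Semantics

variable {AP X E V : Type} {K : ℕ} {Q : Fin K → Type}

/-- Time transition `(l, v_var, v) →^δ (l, v_var, v + δ)` (Def. of configuration
changes, case 2). -/
def TimeStep (N : ∀ k, TimedAutomaton AP X E V (Q k)) (δ : ℝ≥0)
    (c c' : TAConfig Q X V) : Prop :=
  0 < δ ∧ c'.loc = c.loc ∧ c'.varVal = c.varVal ∧
    c'.clockVal = c.clockVal.shift δ ∧
    ∀ k, ccWSat c'.clockVal ((N k).inv (c.loc k))

/-- `t` witnesses the configuration change of automaton `k` on label `α` with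
edge tag `b` (Def. of configuration changes, case 1a). -/
def TransWitness (N : ∀ k, TimedAutomaton AP X E V (Q k)) (k : Fin K)
    (t : TATransition X E V (Q k)) (α : E) (b : EdgeTag)
    (c c' : TAConfig Q X V) : Prop :=
  t.event = α ∧ t.src = c.loc k ∧ t.tgt = c'.loc k ∧
  ccSat c.clockVal t.guard ∧ t.vguard.sat c.varVal ∧
  (∀ x ∈ t.resets, c'.clockVal x = 0) ∧
  (∀ a ∈ t.assigns, c'.varVal a.1 = a.2.eval c.varVal) ∧
  (match b with
   | .ei => ccWSat c.clockVal ((N k).inv (c.loc k)) ∧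
            ccSat c'.clockVal ((N k).inv (c'.loc k))
   | .ie => ccSat c.clockVal ((N k).inv (c.loc k)) ∧
            ccWSat c'.clockVal ((N k).inv (c'.loc k)))

/-- A choice of taken transition (an index into the transition list) for each
automaton that moves. -/
abbrev TrChoice (N : ∀ k, TimedAutomaton AP X E V (Q k)) :=
  ∀ k : Fin K, Option (Fin ((N k).trans.length))

/-- Discrete transition `(l, v_var, v) →^Λ (l', v'_var, v')` realized through the
choice `tr` of taken transitions (Def. of configuration changes, case 1). -/
def DiscreteStepVia (N : ∀ k, TimedAutomaton AP X E V (Q k)) (tr : TrChoice N)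
    (Λ : SyncVec E K) (c c' : TAConfig Q X V) : Prop :=
  (∀ k, Λ k = none ↔ tr k = none) ∧
  (∀ k αb, Λ k = some αb → ∃ i, tr k = some i ∧
      TransWitness N k ((N k).trans.get i) αb.1 αb.2 c c') ∧
  (∀ k, Λ k = none → c'.loc k = c.loc k ∧
      ccSat c.clockVal ((N k).inv (c.loc k)) ∧
      ccSat c'.clockVal ((N k).inv (c'.loc k))) ∧
  (∀ x, (∀ k i, tr k = some i → x ∉ ((N k).trans.get i).resets) →
      c'.clockVal x = c.clockVal x) ∧
  (∀ n, (∀ k i, tr k = some i → n ∉ ((N k).trans.get i).updated) →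
      c'.varVal n = c.varVal n)

/-- Discrete transition `(l, v_var, v) →^Λ (l', v'_var, v')`. -/
def DiscreteStep (N : ∀ k, TimedAutomaton AP X E V (Q k)) (Λ : SyncVec E K)
    (c c' : TAConfig Q X V) : Prop :=
  ∃ tr, DiscreteStepVia N tr Λ c c'

end Semantics

section Traces

variable {AP X E V : Type} {K : ℕ} {Q : Fin K → Type}

/-- An event of a trace: either a delay `δ ∈ ℝ>0` or a discrete vector `Λ`. -/
inductive NetEvent (E : Type) (K : ℕ) where
  | delay (δ : ℝ≥0)
  | disc (Λ : SyncVec E K)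

/-- The configuration change induced by an event. -/
def NetStep (N : ∀ k, TimedAutomaton AP X E V (Q k)) :
    NetEvent E K → TAConfig Q X V → TAConfig Q X V → Prop
  | .delay δ => TimeStep N δ
  | .disc Λ => DiscreteStep N Λ

/-- A trace of a network of timed automata with variables (Def. of traces):
an infinite sequence of configuration changes such that the first event is a
time transition, the initial configuration is as prescribed (initial locations,
clocks all `0`, initial variable valuation `v0`, invariants satisfied), and
every discrete transition is immediately followed by a time transition. -/
structure TATrace (N : ∀ k, TimedAutomaton AP X E V (Q k)) (v0 : V → ℤ) where
  cfg : ℕ → TAConfig Q X V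
  ev : ℕ → NetEvent E K
  step : ∀ h, NetStep N (ev h) (cfg h) (cfg (h + 1))
  first_delay : ∃ δ, ev 0 = NetEvent.delay δ
  init_loc : ∀ k, (cfg 0).loc k = (N k).init
  init_clock : ∀ x, (cfg 0).clockVal x = 0
  init_var : (cfg 0).varVal = v0
  init_inv : ∀ k, ccSat (cfg 0).clockVal ((N k).inv ((cfg 0).loc k))
  disc_then_delay : ∀ h Λ, ev h = NetEvent.disc Λ → ∃ δ, ev (h + 1) = NetEvent.delay δ

end Traces

/-!
A delay keeps every location fixed, and its final clock valuation weakly satisfies the invariants of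
those locations. As the first event is a delay and no two discrete events are adjacent, every
configuration of a trace is the source or the target of a delay. So all invariants occupied in it
are weakly satisfied by the final valuation of that delay, which leaves no room for a positive
literal `x = d`.
-/

theorem ClockLit.wsat.cmp_ne_eq {X : Type} {v : ClockVal X} {l : ClockLit X} (hl : l.wsat v)
    (hpos : l.pos = true) : l.cmp ≠ CCmp.eq := by
  intro hcmp
  simp [ClockLit.wsat, hpos, hcmp] at hl

section WeakInvariants

variable {AP X E V : Type} {K : ℕ} {Q : Fin K → Type} {N : ∀ k, TimedAutomaton AP X E V (Q k)}

namespace TimeStep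

variable {δ : ℝ≥0} {c c' : TAConfig Q X V}

theorem ccWSat_inv_source (hstep : TimeStep N δ c c') (k : Fin K) :
    ccWSat c'.clockVal ((N k).inv (c.loc k)) :=
  hstep.2.2.2.2 k

theorem ccWSat_inv_target (hstep : TimeStep N δ c c') (k : Fin K) :
    ccWSat c'.clockVal ((N k).inv (c'.loc k)) := by
  have hloc : c'.loc = c.loc := hstep.2.1
  simpa only [hloc] using hstep.ccWSat_inv_source k

end TimeStep

namespace TATrace

variable {v0 : V → ℤ} (η : TATrace N v0)

theorem timeStep_of_ev_eq_delay {h : ℕ} {δ : ℝ≥0} (hev : η.ev h = .delay δ) :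
    TimeStep N δ (η.cfg h) (η.cfg (h + 1)) := by
  simpa only [hev, NetStep] using η.step h

theorem ev_eq_delay_or_ev_succ_eq_delay (h : ℕ) :
    (∃ δ, η.ev h = .delay δ) ∨ ∃ δ, η.ev (h + 1) = .delay δ := by
  cases hev : η.ev h with
  | delay δ => exact .inl ⟨δ, rfl⟩
  | disc Λ => exact .inr (η.disc_then_delay h Λ hev)

theorem exists_timeStep_from_or_to (h : ℕ) :
    (∃ δ c, TimeStep N δ (η.cfg h) c) ∨ ∃ δ c, TimeStep N δ c (η.cfg h) := by
  cases h with
  | zero =>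
    obtain ⟨δ, hev⟩ := η.first_delay
    exact .inl ⟨δ, _, η.timeStep_of_ev_eq_delay hev⟩
  | succ n =>
    obtain ⟨δ, hev⟩ | ⟨δ, hev⟩ := η.ev_eq_delay_or_ev_succ_eq_delay n
    · exact .inr ⟨δ, _, η.timeStep_of_ev_eq_delay hev⟩
    · exact .inl ⟨δ, _, η.timeStep_of_ev_eq_delay hev⟩

theorem exists_forall_ccWSat_inv (h : ℕ) :
    ∃ v : ClockVal X, ∀ k, ccWSat v ((N k).inv ((η.cfg h).loc k)) := by
  obtain ⟨_, c, hstep⟩ | ⟨_, _, hstep⟩ := η.exists_timeStep_from_or_to h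
  · exact ⟨c.clockVal, hstep.ccWSat_inv_source⟩
  · exact ⟨(η.cfg h).clockVal, hstep.ccWSat_inv_target⟩

end TATrace

end WeakInvariants

/-- **Statement 9.** Along any trace of a network of TA, the invariant of the
location occupied by each automaton in each configuration is weakly satisfied by
some clock valuation; in particular it contains no positive literal `x = d`. -/
theorem trace_inv_weakly_satisfiable {AP X E V : Type} {K : ℕ} {Q : Fin K → Type}
    (N : ∀ k, TimedAutomaton AP X E V (Q k)) (v0 : V → ℤ)
    (η : TATrace N v0) :
    ∀ (h : ℕ) (k : Fin K),
      (∃ v : ClockVal X, ccWSat v ((N k).inv ((η.cfg h).loc k))) ∧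
      (∀ l ∈ (N k).inv ((η.cfg h).loc k), l.pos = true → l.cmp ≠ CCmp.eq) := by
  intro h k
  obtain ⟨v, hv⟩ := η.exists_forall_ccWSat_inv h
  exact ⟨⟨v, hv k⟩, fun l hl hpos => (hv k l hl).cmp_ne_eq hpos⟩

end TAMC
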